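/- Let K be a field, let M be a d×n matrix over K of rank d, and let C ⊆ ℝⁿ be a matroidal cone. Let L be the field of rational functions over K in one indeterminate λ_{i,k} for each ordered pair (i,k) with 1 ≤ i,k ≤ n, i ≠ k, and e_k − e_i ∈ C. Let B be the n×n matrix over L with B_{i,k} = λ_{i,k} if i ≠ k and e_k − e_i ∈ C, and B_{i,k} = 0 otherwise, and let N = M·(1ₙ + t·B), a d×n matrix with entries in L[t]. Then for every d-element subset z ⊆ {1,…,n}, det(N^z) ≠ 0 in L[t] if and only if e_z = ∑_{i∈z} eᵢ ∈ P_M + C. Consequently, the rank polytope of N, regarded as a matrix over the field of fractions L(t), equals (P_M + C) ∩ Δ_{d,n}. -/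

import Mathlib

open scoped Classical
open Pointwise

noncomputable section

/-- The standard basis vector `eᵢ` of `ℝⁿ`. -/
def eVec (n : ℕ) (i : Fin n) : Fin n → ℝ := Pi.single i 1

/-- A matroidal cone in `ℝⁿ`: the convex cone generated by finitely many vectors of the
form `eᵢ − eⱼ` with `i ≠ j`. -/
def IsMatroidalCone {n : ℕ} (C : Set (Fin n → ℝ)) : Prop :=
  ∃ S : Finset (Fin n × Fin n), (∀ p ∈ S, p.1 ≠ p.2) ∧
    C = {x | ∃ c : Fin n × Fin n → ℝ, (∀ p, 0 ≤ c p) ∧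
      x = ∑ p ∈ S, c p • (eVec n p.1 - eVec n p.2)}

/-- Index type of the indeterminates `λ_{i,k}`: ordered pairs `(i,k)` with `i ≠ k` and
`e_k − e_i ∈ C`. -/
def ConeIdx (n : ℕ) (C : Set (Fin n → ℝ)) : Type :=
  {p : Fin n × Fin n // p.1 ≠ p.2 ∧ eVec n p.2 - eVec n p.1 ∈ C}

/-- The field of rational functions over `K` in the indeterminates `λ_{i,k}`. -/
abbrev LField (K : Type*) [Field K] (n : ℕ) (C : Set (Fin n → ℝ)) : Type _ :=
  FractionRing (MvPolynomial (ConeIdx n C) K)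

/-- The `n × n` matrix `B` with `B_{i,k} = λ_{i,k}` when `i ≠ k` and `e_k − e_i ∈ C`,
and `B_{i,k} = 0` otherwise. -/
def Bmat (K : Type*) [Field K] (n : ℕ) (C : Set (Fin n → ℝ)) :
    Matrix (Fin n) (Fin n) (LField K n C) :=
  Matrix.of fun i k =>
    if h : i ≠ k ∧ eVec n k - eVec n i ∈ C then
      algebraMap (MvPolynomial (ConeIdx n C) K) (LField K n C)
        (MvPolynomial.X (⟨(i, k), h⟩ : ConeIdx n C))
    else 0

/-- The matrix `N = M · (1ₙ + t·B)` over the polynomial ring `L[t]`. -/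
def Nmat {K : Type*} [Field K] {d n : ℕ} (M : Matrix (Fin d) (Fin n) K)
    (C : Set (Fin n → ℝ)) : Matrix (Fin d) (Fin n) (Polynomial (LField K n C)) :=
  (M.map fun a =>
      Polynomial.C (algebraMap (MvPolynomial (ConeIdx n C) K) (LField K n C)
        (MvPolynomial.C a))) *
    (1 + Matrix.of fun i k => Polynomial.X * Polynomial.C (Bmat K n C i k))

/-- The rank polytope of a `d × n` matrix over a field `F`: the convex hull of the
indicator vectors `e_B = ∑_{i ∈ B} eᵢ` of the `d`-element column sets `B` whose columns
are linearly independent. -/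
def rankPolytope {F : Type*} [Field F] {d n : ℕ} (A : Matrix (Fin d) (Fin n) F) :
    Set (Fin n → ℝ) :=
  convexHull ℝ {x | ∃ B : Finset (Fin n), B.card = d ∧
    LinearIndependent F (fun i : B => A.transpose (i : Fin n)) ∧
    x = ∑ i ∈ B, eVec n i}

/-- The hypersimplex `Δ_{d,n}`. -/
def hypersimplex (d n : ℕ) : Set (Fin n → ℝ) :=
  {x | (∀ i, 0 ≤ x i ∧ x i ≤ 1) ∧ ∑ i, x i = d}

def rk (K : Type*) {V ι : Type*} [Field K] [AddCommGroup V] [Module K V] (v : ι → V)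
    (S : Finset ι) : ℕ := Module.finrank K (Submodule.span K (v '' (S : Set ι)))

section rkLemmas
variable {K V ι κ : Type*} [Field K] [AddCommGroup V] [Module K V] [FiniteDimensional K V]

lemma rk_mono (v : ι → V) {S T : Finset ι} (h : S ⊆ T) : rk K v S ≤ rk K v T := by
  apply Submodule.finrank_mono
  apply Submodule.span_mono
  exact Set.image_mono (by exact_mod_cast h)

lemma rk_submod [DecidableEq ι] (v : ι → V) (S T : Finset ι) :
    rk K v (S ∪ T) + rk K v (S ∩ T) ≤ rk K v S + rk K v T := by
  have h0 := Submodule.finrank_sup_add_finrank_inf_eq (K := K)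
    (Submodule.span K (v '' (S : Set ι))) (Submodule.span K (v '' (T : Set ι)))
  rw [← Submodule.span_union, ← Set.image_union, ← Finset.coe_union] at h0
  unfold rk
  rw [← h0]
  refine Nat.add_le_add_left ?_ _
  apply Submodule.finrank_mono
  apply le_inf
  · apply Submodule.span_mono
    apply Set.image_mono
    simp
  · apply Submodule.span_mono
    apply Set.image_mono
    simp

lemma rado [DecidableEq ι] [DecidableEq κ] (f0 : κ → ι) (v : ι → V) (U : Finset κ) (δ : ℕ) : ∀ (m : ℕ) (A : κ → Finset ι),
    (∑ k ∈ U, (A k).card = m) → (∀ k ∈ U, (A k).Nonempty) →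
    (∀ J ⊆ U, J.card ≤ rk K v (J.biUnion A) + δ) →
    ∃ f : κ → ι, (∀ k ∈ U, f k ∈ A k) ∧ U.card ≤ rk K v (U.image f) + δ := by
  intro m
  induction m using Nat.strong_induction_on with
  | _ m ih =>
  intro A hm hne h
  by_cases hc : ∀ k ∈ U, (A k).card ≤ 1
  · by_cases hU : U.Nonempty
    · obtain ⟨k0, hk0⟩ := hU
      obtain ⟨i0, -⟩ := hne k0 hk0
      have hch : ∀ k, ∃ i, k ∈ U → A k = {i} := by
        intro k
        by_cases hk : k ∈ U
        · have := Finset.card_eq_one.1 (le_antisymm (hc k hk) (Finset.card_pos.2 (hne k hk)))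
          obtain ⟨i, hi⟩ := this
          exact ⟨i, fun _ => hi⟩
        · exact ⟨i0, fun h => absurd h hk⟩
      choose f hf using hch
      refine ⟨f, fun k hk => by simp [hf k hk], ?_⟩
      have e : U.biUnion A = U.image f := by
        ext i
        simp only [Finset.mem_biUnion, Finset.mem_image]
        constructor
        · rintro ⟨k, hk, hi⟩
          rw [hf k hk] at hi
          exact ⟨k, hk, (Finset.mem_singleton.1 hi).symm⟩
        · rintro ⟨k, hk, hi⟩
          refine ⟨k, hk, ?_⟩
          rw [hf k hk]
          simp [hi]
      rw [← e]
      exact h U subset_rfl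
    · have hU' : U = ∅ := Finset.not_nonempty_iff_eq_empty.1 hU
      subst hU'
      exact ⟨f0, by simp, by simp⟩
  · push Not at hc
    obtain ⟨k, hk, hk1⟩ := hc
    obtain ⟨x, hx, y, hy, hxy⟩ := Finset.one_lt_card.1 hk1
    have key : ∀ x ∈ A k, (¬ ∃ f : κ → ι, (∀ k ∈ U, f k ∈ A k) ∧
        U.card ≤ rk K v (U.image f) + δ) →
        ∃ J ⊆ U, k ∈ J ∧
          rk K v (J.biUnion (Function.update A k ((A k).erase x))) + δ < J.card := by
      intro x hx hcon
      by_contra hno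
      push Not at hno
      apply hcon
      have := ih (∑ j ∈ U, (Function.update A k ((A k).erase x) j).card) ?_
        (Function.update A k ((A k).erase x)) rfl ?_ ?_
      · obtain ⟨f, hf, hf2⟩ := this
        refine ⟨f, fun j hj => ?_, hf2⟩
        have := hf j hj
        by_cases hjk : j = k
        · subst hjk
          simp at this
          exact this.2
        · simpa [hjk] using this
      · rw [← hm]
        apply Finset.sum_lt_sum
        · intro j hj
          by_cases hjk : j = k
          · subst hjk
            simp
            exact Finset.card_le_card (Finset.erase_subset _ _)
          · simp [hjk]
        · exact ⟨k, hk, by simpa using Finset.card_erase_lt_of_mem hx⟩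
      · intro j hj
        by_cases hjk : j = k
        · subst hjk
          simp only [Function.update_self]
          rw [← Finset.card_pos, Finset.card_erase_of_mem hx]
          omega
        · simpa [hjk] using hne j hj
      · intro J hJ
        by_cases hkJ : k ∈ J
        · exact hno J hJ hkJ
        · have : J.biUnion (Function.update A k ((A k).erase x)) = J.biUnion A := by
            apply Finset.biUnion_congr rfl
            intro j hj
            rw [Function.update_of_ne]
            rintro rfl
            exact hkJ hj
          rw [this]
          exact h J hJ
    by_contra hcon
    obtain ⟨J1, hJ1, hk1, h1⟩ := key x hx hcon
    obtain ⟨J2, hJ2, hk2, h2⟩ := key y hy hcon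
    set S := J1.biUnion (Function.update A k ((A k).erase x))
    set T := J2.biUnion (Function.update A k ((A k).erase y))
    have hsub := rk_submod (K := K) v S T
    have hS : ∀ j ∈ J1, j ≠ k → A j ⊆ S := by
      intro j hj hjk i hi
      exact Finset.mem_biUnion.2 ⟨j, hj, by simpa [hjk] using hi⟩
    have hT : ∀ j ∈ J2, j ≠ k → A j ⊆ T := by
      intro j hj hjk i hi
      exact Finset.mem_biUnion.2 ⟨j, hj, by simpa [hjk] using hi⟩
    have hS' : ∀ i ∈ A k, i ≠ x → i ∈ S := fun i hi hix =>
      Finset.mem_biUnion.2 ⟨k, hk1, by simp [hi, hix]⟩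
    have hT' : ∀ i ∈ A k, i ≠ y → i ∈ T := fun i hi hix =>
      Finset.mem_biUnion.2 ⟨k, hk2, by simp [hi, hix]⟩
    have a1 : (J1 ∪ J2).biUnion A ⊆ S ∪ T := by
      intro i hi
      obtain ⟨j, hj, hij⟩ := Finset.mem_biUnion.1 hi
      rw [Finset.mem_union] at hj ⊢
      by_cases hjk : j = k
      · subst hjk
        by_cases hix : i = x
        · right; exact hT' i hij (by rw [hix]; exact hxy)
        · left; exact hS' i hij hix
      · rcases hj with hj | hj
        · left; exact hS j hj hjk hij
        · right; exact hT j hj hjk hij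
    have a2 : ((J1 ∩ J2).erase k).biUnion A ⊆ S ∩ T := by
      intro i hi
      obtain ⟨j, hj, hij⟩ := Finset.mem_biUnion.1 hi
      simp only [Finset.mem_erase, Finset.mem_inter] at hj ⊢
      exact ⟨hS j hj.2.1 hj.1 hij, hT j hj.2.2 hj.1 hij⟩
    have b1 := (h _ (Finset.union_subset hJ1 hJ2)).trans
      (Nat.add_le_add_right (rk_mono (K := K) v a1) δ)
    have b2 := (h ((J1 ∩ J2).erase k)
      ((Finset.erase_subset _ _).trans (Finset.inter_subset_left.trans hJ1))).trans
      (Nat.add_le_add_right (rk_mono (K := K) v a2) δ)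
    have hkm : k ∈ J1 ∩ J2 := Finset.mem_inter.2 ⟨hk1, hk2⟩
    rw [Finset.card_erase_of_mem hkm] at b2
    have := Finset.card_pos.2 ⟨k, hkm⟩
    have := Finset.card_union_add_card_inter J1 J2
    omega

lemma rk_eq_card (v : ι → V) {s z : Finset ι} (hzs : z ⊆ s)
    (hz : LinearIndependent K (fun i : z => v i))
    (hsp : (s : Set ι) ⊆ v ⁻¹' (Submodule.span K (v '' (z : Set ι)))) : rk K v s = z.card := by
  have : Submodule.span K (v '' (s : Set ι)) = Submodule.span K (v '' (z : Set ι)) := by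
    apply le_antisymm
    · rw [Submodule.span_le]
      exact Set.image_subset_iff.2 hsp
    · exact Submodule.span_mono (Set.image_mono (by exact_mod_cast hzs))
  unfold rk
  rw [this]
  have := finrank_span_eq_card hz
  rw [Fintype.card_coe] at this
  rw [← this]
  have e : v '' (z : Set ι) = Set.range (fun i : z => v i) := by
    ext y
    simp
  rw [e]

lemma card_eq_rk (v : ι → V) {z : Finset ι} (hz : LinearIndependent K (fun i : z => v i)) :
    rk K v z = z.card :=
  rk_eq_card v subset_rfl hz fun i hi => Submodule.subset_span ⟨i, hi, rfl⟩

lemma rk_le_card (v : ι → V) (z : Finset ι) : rk K v z ≤ z.card := by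
  have := finrank_span_finset_le_card (R := K) (z.image v)
  rw [Set.finrank, Finset.coe_image] at this
  exact this.trans Finset.card_image_le

/-- Greedy basis. -/
lemma greedy (v : ι → V) (w x : ι → ℝ) (hx : ∀ U : Finset ι, ∑ i ∈ U, x i ≤ rk K v U)
    (s : Finset ι) : ∃ z ⊆ s, LinearIndependent K (fun i : z => v i) ∧
      (s : Set ι) ⊆ v ⁻¹' (Submodule.span K (v '' (z : Set ι))) ∧
      ∀ c : ℝ, (∀ i ∈ s, c ≤ w i) →
        ∑ i ∈ s, w i * x i - c * ∑ i ∈ s, x i ≤ ∑ i ∈ z, w i - c * z.card := by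
  induction s using Finset.induction_on_min_value w with
  | empty => exact ⟨∅, by simp, by simp, by simp, by simp⟩
  | insert a s has hmin ih =>
    obtain ⟨z, hzs, hz, hsp, hb⟩ := ih
    have hfin : ∀ z' ⊆ insert a s, LinearIndependent K (fun i : z' => v i) →
      ((insert a s : Finset ι) : Set ι) ⊆ v ⁻¹' (Submodule.span K (v '' (z' : Set ι))) → 
      ∑ i ∈ z', w i - w a * z'.card = ∑ i ∈ z, w i - w a * z.card →
      ∀ c : ℝ, (∀ i ∈ insert a s, c ≤ w i) →
        ∑ i ∈ insert a s, w i * x i - c * ∑ i ∈ insert a s, x i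
          ≤ ∑ i ∈ z', w i - c * z'.card := by
      intro z' h1 h2 h3 h4 c hc
      have e1 := hb (w a) hmin
      have e2 := hx (insert a s)
      rw [rk_eq_card v h1 h2 h3] at e2
      have e3 := hc a (by simp)
      have e4 := mul_le_mul_of_nonneg_left e2 (sub_nonneg.2 e3)
      rw [Finset.sum_insert has] at e4 ⊢
      rw [Finset.sum_insert has]
      nlinarith
    by_cases hva : v a ∈ Submodule.span K (v '' (z : Set ι))
    · have q1 : z ⊆ insert a s := hzs.trans (Finset.subset_insert _ _)
      have q3 : ((insert a s : Finset ι) : Set ι) ⊆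
          v ⁻¹' (Submodule.span K (v '' (z : Set ι))) := by
        rw [Finset.coe_insert, Set.insert_subset_iff]
        exact ⟨hva, hsp⟩
      exact ⟨z, q1, hz, q3, hfin z q1 hz q3 rfl⟩
    · have haz : a ∉ z := fun h => has (hzs h)
      have q1 : insert a z ⊆ insert a s := Finset.insert_subset_insert _ hzs
      have q2 : LinearIndependent K (fun i : (insert a z : Finset ι) => v i) := by
        have : LinearIndepOn K v ((insert a z : Finset ι) : Set ι) := by
          rw [Finset.coe_insert]
          exact LinearIndepOn.insert hz hva
        exact this
      have q3 : ((insert a s : Finset ι) : Set ι) ⊆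
          v ⁻¹' (Submodule.span K (v '' ((insert a z : Finset ι) : Set ι))) := by
        rw [Finset.coe_insert, Finset.coe_insert, Set.insert_subset_iff]
        refine ⟨Submodule.subset_span ⟨a, by simp, rfl⟩, fun i hi => ?_⟩
        exact Submodule.span_mono (Set.image_mono (Set.subset_insert _ _)) (hsp hi)
      refine ⟨_, q1, q2, q3, hfin _ q1 q2 q3 ?_⟩
      rw [Finset.sum_insert haz, Finset.card_insert_of_notMem haz]
      push_cast
      ring

lemma exists_indep (v : ι → V) (s : Finset ι) :
    ∃ z ⊆ s, LinearIndependent K (fun i : z => v i) ∧ rk K v s = z.card := by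
  obtain ⟨z, h1, h2, h3, -⟩ := greedy (K := K) v 0 0 (fun U => by simp) s
  exact ⟨z, h1, h2, rk_eq_card v h1 h2 h3⟩

lemma rk_comp [DecidableEq ι] (v : ι → V) (f : κ → ι) (U : Finset κ) :
    rk K (fun k => v (f k)) U = rk K v (U.image f) := by
  unfold rk
  rw [Finset.coe_image, Set.image_image]

end rkLemmas

lemma sum_eVec_apply {n : ℕ} (B : Finset (Fin n)) (j : Fin n) :
    (∑ i ∈ B, eVec n i) j = if j ∈ B then 1 else 0 := by
  simp [eVec, Finset.sum_apply, Pi.single_apply]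

/-- Edmonds. -/
lemma mem_rankPolytope {F : Type*} [Field F] {d n : ℕ} (A : Matrix (Fin d) (Fin n) F)
    (x : Fin n → ℝ) (hx : ∀ U : Finset (Fin n), ∑ i ∈ U, x i ≤ rk F A.transpose U)
    (hd : ∑ i, x i = d) : x ∈ rankPolytope A := by
  by_contra hcon
  unfold rankPolytope at hcon
  set P := {x | ∃ B : Finset (Fin n), B.card = d ∧
    LinearIndependent F (fun i : B => A.transpose (i : Fin n)) ∧
    x = ∑ i ∈ B, eVec n i} with hP
  have hfin : P.Finite := by
    apply (Set.finite_range (fun B : Finset (Fin n) => ∑ i ∈ B, eVec n i)).subset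
    rintro _ ⟨B, -, -, rfl⟩
    exact ⟨B, rfl⟩
  obtain ⟨f, u, hf1, hf2⟩ := geometric_hahn_banach_closed_point (convex_convexHull ℝ P)
    (hfin.isClosed_convexHull ℝ) hcon
  set w : Fin n → ℝ := fun i => f (eVec n i)
  obtain ⟨z, -, hz, hsp, hb⟩ := greedy (K := F) A.transpose w x hx Finset.univ
  have hzc : z.card = d := by
    apply le_antisymm
    · have := hz.fintype_card_le_finrank
      simpa using this
    · have h1 := hx Finset.univ
      rw [hd] at h1
      have h1 : d ≤ rk F A.transpose Finset.univ := by exact_mod_cast h1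
      refine h1.trans ?_
      have : rk F A.transpose Finset.univ ≤ rk F A.transpose z := by
        apply Submodule.finrank_mono
        rw [Submodule.span_le]
        exact Set.image_subset_iff.2 hsp
      refine this.trans ?_
      exact rk_le_card _ _
  obtain ⟨c, hc⟩ : ∃ c : ℝ, ∀ i, c ≤ w i := by
    obtain ⟨c, hc⟩ := (Set.finite_range w).bddBelow
    exact ⟨c, fun i => hc ⟨i, rfl⟩⟩
  have h1 := hb c (fun i _ => hc i)
  rw [hd, hzc] at h1
  have h2 := hf1 _ (subset_convexHull ℝ P ⟨z, hzc, hz, rfl⟩)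
  have hfx : f x = ∑ i, w i * x i := by
    have : x = ∑ i, x i • eVec n i := by
      ext j
      simp [eVec, Finset.sum_apply, Pi.single_apply]
    conv_lhs => rw [this]
    rw [map_sum]
    exact Finset.sum_congr rfl fun i _ => by rw [map_smul, smul_eq_mul, mul_comm]
  rw [map_sum] at h2
  rw [hfx] at hf2
  have : ∑ i ∈ z, w i = ∑ i ∈ z, f (eVec n i) := rfl
  linarith

section cone
variable {n : ℕ} {C : Set (Fin n → ℝ)}

lemma cone_zero (hC : IsMatroidalCone C) : (0 : Fin n → ℝ) ∈ C := by
  obtain ⟨S, -, rfl⟩ := hC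
  exact ⟨0, by simp, by simp⟩

lemma cone_add (hC : IsMatroidalCone C) {x y : Fin n → ℝ} (hx : x ∈ C) (hy : y ∈ C) :
    x + y ∈ C := by
  obtain ⟨S, -, rfl⟩ := hC
  obtain ⟨c, hc, rfl⟩ := hx
  obtain ⟨c', hc', rfl⟩ := hy
  exact ⟨c + c', fun p => add_nonneg (hc p) (hc' p), by
    simp [add_smul, Finset.sum_add_distrib]⟩

lemma cone_convex (hC : IsMatroidalCone C) : Convex ℝ C := by
  intro x hx y hy a b ha hb _
  refine cone_add hC ?_ ?_
  · obtain ⟨S, -, rfl⟩ := hC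
    obtain ⟨c, hc, rfl⟩ := hx
    exact ⟨a • c, fun p => mul_nonneg ha (hc p), by simp [Finset.smul_sum, smul_smul]⟩
  · obtain ⟨S, -, rfl⟩ := hC
    obtain ⟨c, hc, rfl⟩ := hy
    exact ⟨b • c, fun p => mul_nonneg hb (hc p), by simp [Finset.smul_sum, smul_smul]⟩

lemma cone_sum (hC : IsMatroidalCone C) {κ : Type*} (s : Finset κ) (g : κ → Fin n → ℝ)
    (hg : ∀ k ∈ s, g k ∈ C) : ∑ k ∈ s, g k ∈ C :=
  Finset.sum_induction g (· ∈ C) (fun _ _ => cone_add hC) (cone_zero hC) hg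

lemma sum_eVec (U : Finset (Fin n)) (i : Fin n) :
    ∑ j ∈ U, eVec n i j = if i ∈ U then 1 else 0 := by
  simp [eVec, Pi.single_apply]

lemma cone_down (hC : IsMatroidalCone C) (U : Finset (Fin n))
    (hU : ∀ k ∈ U, ∀ i, eVec n k - eVec n i ∈ C → i ∈ U) {x : Fin n → ℝ} (hx : x ∈ C) :
    ∑ j ∈ U, x j ≤ 0 := by
  obtain ⟨S, hS, rfl⟩ := hC
  obtain ⟨c, hc, rfl⟩ := hx
  have hmem : ∀ p ∈ S, eVec n p.1 - eVec n p.2 ∈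
      {x | ∃ c : Fin n × Fin n → ℝ, (∀ p, 0 ≤ c p) ∧
      x = ∑ p ∈ S, c p • (eVec n p.1 - eVec n p.2)} := by
    intro p hp
    refine ⟨fun q => if q = p then 1 else 0, fun q => by positivity, ?_⟩
    simp [ite_smul, hp]
  simp only [Finset.sum_apply]
  rw [Finset.sum_comm]
  apply Finset.sum_nonpos
  intro p hp
  simp only [Pi.smul_apply, Pi.sub_apply, smul_eq_mul]
  rw [← Finset.mul_sum, Finset.sum_sub_distrib, sum_eVec, sum_eVec]
  apply mul_nonpos_of_nonneg_of_nonpos (hc p)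
  have := hU p.1 
  by_cases h1 : p.1 ∈ U
  · have h2 := hU _ h1 p.2 (hmem p hp)
    simp [h1, h2]
  · simp only [h1, if_false]
    split_ifs <;> norm_num

end cone

lemma rankPolytope_le_rk {F : Type*} [Field F] {d n : ℕ} (A : Matrix (Fin d) (Fin n) F)
    {p : Fin n → ℝ} (hp : p ∈ rankPolytope A) (U : Finset (Fin n)) :
    ∑ i ∈ U, p i ≤ rk F A.transpose U := by
  have hconv : Convex ℝ {x : Fin n → ℝ | ∑ i ∈ U, x i ≤ rk F A.transpose U} := by
    apply convex_halfSpace_le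
    constructor
    · intro x y; simp [Finset.sum_add_distrib]
    · intro c x; simp [Finset.mul_sum]
  refine convexHull_min ?_ hconv hp
  rintro _ ⟨B, -, hB, rfl⟩
  simp only [Set.mem_ofPred_eq, sum_eVec_apply]
  have h1 : LinearIndependent F (fun i : (U ∩ B : Finset (Fin n)) => A.transpose i) :=
    hB.comp (fun i : (U ∩ B : Finset (Fin n)) => (⟨i, (Finset.mem_inter.1 i.2).2⟩ : B))
      (fun a b h => Subtype.ext (congrArg (fun t : B => (t : Fin n)) h))
  have h2 := (card_eq_rk _ h1).symm.le.trans (rk_mono (K := F) A.transpose Finset.inter_subset_left)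
  simp only [Finset.sum_ite_mem, Finset.sum_const, nsmul_eq_mul, mul_one]
  exact_mod_cast h2

lemma exists_left_inv {K : Type*} [Field K] {m ι : Type*} [Fintype m] [Fintype ι]
    (A : Matrix m ι K) (h : LinearIndependent K A.transpose) :
    ∃ G : Matrix ι m K, G * A = 1 := by
  have hinj : Function.Injective A.mulVecLin := by
    have := Matrix.mulVec_injective_iff.2 h
    exact this
  obtain ⟨g, hg⟩ := A.mulVecLin.exists_leftInverse_of_injective (LinearMap.ker_eq_bot.2 hinj)
  refine ⟨LinearMap.toMatrix' g, ?_⟩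
  have h1 : LinearMap.toMatrix' A.mulVecLin = A := LinearMap.toMatrix'_toLin' A
  have h2 := LinearMap.toMatrix'_comp g A.mulVecLin
  rw [hg, LinearMap.toMatrix'_id, h1] at h2
  exact h2.symm

open Polynomial in
lemma det_helper {K J m : Type*} [Field K] [Fintype J] [Fintype m] (G : Matrix J m K)
    (MJ M0 : Matrix m J K) (hG : G * MJ = 1) (N1 : Matrix m J K[X]) (D : J → K[X])
    (h2 : ∀ a k, N1 a k * D k = Polynomial.C (M0 a k) + X * Polynomial.C (MJ a k)) :
    (G.map Polynomial.C * N1).det ≠ 0 := by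
  intro e1
  have e3 : N1 * Matrix.diagonal D = M0.map Polynomial.C + (X : K[X]) • MJ.map Polynomial.C := by
    ext1 a k
    rw [Matrix.mul_diagonal]
    exact h2 a k
  have e2 : (G.map Polynomial.C * N1) * Matrix.diagonal D =
        (X : K[X]) • (1 : Matrix J J K).map Polynomial.C + (G * M0).map Polynomial.C := by
    rw [Matrix.mul_assoc, e3, Matrix.mul_add, Matrix.mul_smul, ← Matrix.map_mul,
      ← Matrix.map_mul, hG, add_comm]
  have e5 := congrArg Matrix.det e2
  rw [Matrix.det_mul, e1, zero_mul] at e5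
  have e6 := Polynomial.coeff_det_X_add_C_card (1 : Matrix J J K) (G * M0)
  rw [← e5] at e6
  simp at e6

lemma indep_helper {R S F J m : Type*} [CommRing R] [CommRing S] [Field F] [Fintype J] [Fintype m]
    (ψ : R →+* F) (hψ : Function.Injective ψ) (ε : R →+* S) (G : Matrix J m R) (N : Matrix m J R)
    (h : (G.map ε * N.map ε).det ≠ 0) : LinearIndependent F (N.map ψ).transpose := by
  have hq : (G * N).det ≠ 0 := by
    intro h0
    apply h
    rw [← Matrix.map_mul, ← RingHom.mapMatrix_apply, ← RingHom.map_det, h0, map_zero]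
  have hdet : (G.map ψ * N.map ψ).det ≠ 0 := by
    rw [← Matrix.map_mul, ← RingHom.mapMatrix_apply, ← RingHom.map_det]
    exact (map_ne_zero_iff ψ hψ).2 hq
  have hli := Matrix.linearIndependent_cols_of_det_ne_zero hdet
  exact LinearIndependent.of_comp (G.map ψ).mulVecLin hli

/-- The matrix `B` over the polynomial ring. -/
def B0mat (K : Type*) [Field K] (n : ℕ) (C : Set (Fin n → ℝ)) (i k : Fin n) :
    MvPolynomial (ConeIdx n C) K :=
  if h : i ≠ k ∧ eVec n k - eVec n i ∈ C then
    (MvPolynomial.X (⟨(i, k), h⟩ : ConeIdx n C))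
  else 0

/-- The matrix `N` over the polynomial ring. -/
def N0mat {K : Type*} [Field K] {d n : ℕ} (M : Matrix (Fin d) (Fin n) K)
    (C : Set (Fin n → ℝ)) :
    Matrix (Fin d) (Fin n) (Polynomial (MvPolynomial (ConeIdx n C) K)) :=
  Matrix.of fun a k => Polynomial.C (MvPolynomial.C (M a k)) +
    ∑ i, Polynomial.C (MvPolynomial.C (M a i)) * (Polynomial.X * Polynomial.C (B0mat K n C i k))

lemma Nmat_eq {K : Type*} [Field K] {d n : ℕ} (M : Matrix (Fin d) (Fin n) K)
    (C : Set (Fin n → ℝ)) :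
    Nmat M C = (N0mat M C).map (Polynomial.mapRingHom
      (algebraMap (MvPolynomial (ConeIdx n C) K) (LField K n C))) := by
  have hB : ∀ i k, Bmat K n C i k =
      algebraMap (MvPolynomial (ConeIdx n C) K) (LField K n C) (B0mat K n C i k) := by
    intro i k
    simp only [Bmat, B0mat, Matrix.of_apply]
    split_ifs
    · rfl
    · rw [map_zero]
  unfold Nmat
  rw [Matrix.mul_add, Matrix.mul_one]
  ext1 a k
  rw [Matrix.add_apply, Matrix.mul_apply]
  simp only [N0mat, Matrix.map_apply, Matrix.of_apply, map_add, map_sum, map_mul]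
  simp only [Polynomial.coe_mapRingHom, Polynomial.map_X, Polynomial.map_C]
  refine congrArg₂ _ rfl (Finset.sum_congr rfl fun i _ => ?_)
  rw [hB i k]

open Polynomial in
lemma indep_N {K : Type*} [Field K] {d n : ℕ} (M : Matrix (Fin d) (Fin n) K)
    (C : Set (Fin n → ℝ)) (J : Finset (Fin n)) (f : Fin n → Fin n)
    (hf : ∀ k ∈ J, eVec n k - eVec n (f k) ∈ C)
    (hind : LinearIndependent K (fun k : J => M.transpose (f k))) :
    LinearIndependent (FractionRing (Polynomial (LField K n C)))
      (fun k : J => ((Nmat M C).map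
        (algebraMap (Polynomial (LField K n C))
          (FractionRing (Polynomial (LField K n C))))).transpose k) := by
  obtain ⟨G, hG⟩ := exists_left_inv (M.submatrix id (fun k : J => f k)) hind
  let ev : MvPolynomial (ConeIdx n C) K →+* K :=
    MvPolynomial.eval (fun p : ConeIdx n C => if p.1.1 = f p.1.2 then 1 else 0)
  have hevC : ∀ a, ev (MvPolynomial.C a) = a := fun a => MvPolynomial.eval_C a
  have hevB : ∀ i k, ev (B0mat K n C i k) =
      if i = f k ∧ i ≠ k ∧ eVec n k - eVec n i ∈ C then 1 else 0 := by
    intro i k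
    unfold B0mat
    by_cases h : i ≠ k ∧ eVec n k - eVec n i ∈ C
    · rw [dif_pos h]
      refine (MvPolynomial.eval_X _).trans ?_
      by_cases h' : i = f k
      · exact (if_pos h').trans (if_pos ⟨h', h⟩).symm
      · exact (if_neg h').trans (if_neg (fun hh => h' hh.1)).symm
    · rw [dif_neg h, if_neg (fun hh => h hh.2), map_zero]
  have h2 : ∀ a, ∀ k ∈ J, mapRingHom ev (N0mat M C a k) * (if f k = k then 1 + X else 1)
      = Polynomial.C (M a k) + X * Polynomial.C (M a (f k)) := by
    intro a k hk
    simp only [N0mat, Matrix.of_apply, map_add, map_sum, map_mul,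
      Polynomial.coe_mapRingHom, Polynomial.map_X, Polynomial.map_C, hevC, hevB]
    rw [Finset.sum_eq_single (f k)]
    · by_cases hfk : f k = k
      · simp [hfk]; ring
      · rw [if_neg hfk, if_pos ⟨rfl, hfk, hf k hk⟩, map_one, mul_one, mul_one, mul_comm X]
    · intro b _ hb
      simp [hb]
    · simp
  have hdet := det_helper G _ (M.submatrix id (fun k : J => (k : Fin n))) hG
    (((N0mat M C).submatrix id (fun k : J => (k : Fin n))).map (mapRingHom ev))
    (fun k => if f k = k then 1 + X else 1) (fun a k => h2 a k k.2)
  have hGe : G.map Polynomial.C =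
      (G.map fun a => Polynomial.C (MvPolynomial.C (σ := ConeIdx n C) a)).map (mapRingHom ev) := by
    ext1 a k
    simp [hevC]
  rw [hGe] at hdet
  have hψ : Function.Injective ((algebraMap (Polynomial (LField K n C))
      (FractionRing (Polynomial (LField K n C)))).comp
      (mapRingHom (algebraMap (MvPolynomial (ConeIdx n C) K) (LField K n C)))) := by
    rw [RingHom.coe_comp]
    refine (IsFractionRing.injective (Polynomial (LField K n C))
      (FractionRing (Polynomial (LField K n C)))).comp ?_
    exact Polynomial.map_injective _
      (IsFractionRing.injective (MvPolynomial (ConeIdx n C) K) (LField K n C))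
  have := indep_helper _ hψ _ _ _ hdet
  rw [Nmat_eq]
  exact this

lemma rk_N_aux {K F : Type*} [Field K] [Field F] {d n : ℕ} (M : Matrix (Fin d) (Fin n) K)
    (NF : Matrix (Fin d) (Fin n) F) (C : Set (Fin n → ℝ)) (hC : IsMatroidalCone C)
    (hNF : ∀ (J : Finset (Fin n)) (f : Fin n → Fin n),
      (∀ k ∈ J, eVec n k - eVec n (f k) ∈ C) →
      LinearIndependent K (fun k : J => M.transpose (f k)) →
      LinearIndependent F (fun k : J => NF.transpose k)) {x : Fin n → ℝ}
    (hx : x ∈ rankPolytope M + C) (h01 : ∀ i, 0 ≤ x i ∧ x i ≤ 1) (U : Finset (Fin n)) :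
    ∑ i ∈ U, x i ≤ rk F NF.transpose U := by
  obtain ⟨p, hp, c, hc, hpc⟩ := hx
  have hxi : ∀ i, x i = p i + c i := fun i => by rw [← hpc]; rfl
  let A : Fin n → Finset (Fin n) := fun k => Finset.univ.filter fun i => eVec n k - eVec n i ∈ C
  have hAk : ∀ k, k ∈ A k := fun k => by simp [A, cone_zero hC]
  obtain ⟨m, hm⟩ : ∃ m, m = ⌈∑ i ∈ U, x i⌉₊ := ⟨_, rfl⟩
  have hxU : ∑ i ∈ U, x i ≤ U.card := by
    calc _ ≤ ∑ i ∈ U, (1 : ℝ) := Finset.sum_le_sum fun i _ => (h01 i).2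
      _ = _ := by simp
  have hmU : m ≤ U.card := hm ▸ Nat.ceil_le.2 hxU
  have hcond : ∀ J ⊆ U, J.card ≤ rk K M.transpose (J.biUnion A) + (U.card - m) := by
    intro J hJ
    have t1 := rankPolytope_le_rk M hp (J.biUnion A)
    have t2 := cone_down hC (J.biUnion A) (by
      intro k hk i hi
      obtain ⟨j, hj, hkj⟩ := Finset.mem_biUnion.1 hk
      refine Finset.mem_biUnion.2 ⟨j, hj, ?_⟩
      simp only [A, Finset.mem_filter, Finset.mem_univ, true_and] at hkj ⊢
      have := cone_add hC hkj hi
      simpa using this) hc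
    have t3 : ∑ i ∈ J, x i ≤ ∑ i ∈ J.biUnion A, x i :=
      Finset.sum_le_sum_of_subset_of_nonneg
        (fun k hk => Finset.mem_biUnion.2 ⟨k, hk, hAk k⟩) (fun i _ _ => (h01 i).1)
    have t4 : ∑ i ∈ J.biUnion A, x i = ∑ i ∈ J.biUnion A, p i + ∑ i ∈ J.biUnion A, c i := by
      rw [← Finset.sum_add_distrib]; exact Finset.sum_congr rfl fun i _ => hxi i
    have t5 := Finset.sum_sdiff (f := x) hJ
    have t6 : ∑ i ∈ U \ J, x i ≤ (U \ J).card := by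
      calc _ ≤ ∑ i ∈ U \ J, (1 : ℝ) := Finset.sum_le_sum fun i _ => (h01 i).2
        _ = _ := by simp
    have t7 : m ≤ rk K M.transpose (J.biUnion A) + (U \ J).card := by
      rw [hm]
      apply Nat.ceil_le.2
      push_cast
      linarith
    have t8 := Finset.card_sdiff_add_card_eq_card hJ
    omega
  obtain ⟨f, hf, hfr⟩ := rado (K := K) id M.transpose U (U.card - m) _ A rfl
    (fun k _ => ⟨k, hAk k⟩) hcond
  have hrm : m ≤ rk K (fun k => M.transpose (f k)) U := by
    have : rk K (fun k => M.transpose (f k)) U = rk K M.transpose (U.image f) :=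
      rk_comp _ _ _
    omega
  obtain ⟨J, hJU, hJ, hJc⟩ := exists_indep (K := K) (fun k => M.transpose (f k)) U
  have hN := hNF J f (fun k hk => by
    have := hf k (hJU hk)
    simpa [A] using this) hJ
  have e1 := (card_eq_rk _ hN).symm.le.trans (rk_mono _ hJU)
  refine (Nat.le_ceil _).trans ?_
  rw [← hm]
  have : m ≤ J.card := hrm.trans hJc.le
  exact_mod_cast this.trans e1

lemma rk_N {K : Type*} [Field K] {d n : ℕ} (M : Matrix (Fin d) (Fin n) K)
    (C : Set (Fin n → ℝ)) (hC : IsMatroidalCone C) {x : Fin n → ℝ}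
    (hx : x ∈ rankPolytope M + C) (h01 : ∀ i, 0 ≤ x i ∧ x i ≤ 1) (U : Finset (Fin n)) :
    ∑ i ∈ U, x i ≤ rk (FractionRing (Polynomial (LField K n C))) ((Nmat M C).map
        (algebraMap (Polynomial (LField K n C))
          (FractionRing (Polynomial (LField K n C))))).transpose U :=
  rk_N_aux M _ C hC (indep_N M C) hx h01 U

lemma det_fwd {K : Type*} [Field K] {d n : ℕ}
    (M : Matrix (Fin d) (Fin n) K)
    (C : Set (Fin n → ℝ)) (hC : IsMatroidalCone C) (z : Finset (Fin n)) (e : Fin d ≃ z)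
    (h : ((Nmat M C).submatrix id (fun i : Fin d => (e i : Fin n))).det ≠ 0) :
    (∑ i ∈ z, eVec n i) ∈ rankPolytope M + C := by
  set Q := Polynomial (LField K n C)
  let φ : K →+* Q := Polynomial.C.comp ((algebraMap (MvPolynomial (ConeIdx n C) K)
    (LField K n C)).comp MvPolynomial.C)
  let E : Matrix (Fin n) (Fin n) Q :=
    (1 + Matrix.of fun i k => Polynomial.X * Polynomial.C (Bmat K n C i k))
  have hexp : ((Nmat M C).submatrix id (fun i : Fin d => (e i : Fin n))).det =
      ∑ f : Fin d → Fin n, (∏ k, E (f k) (e k)) * φ (M.submatrix id f).det := by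
    rw [← Matrix.det_transpose]
    have : ((Nmat M C).submatrix id (fun i : Fin d => (e i : Fin n))).transpose =
        fun k => ∑ i : Fin n, E i (e k) • (fun a => φ (M a i)) := by
      ext1 k a
      simp only [Matrix.transpose_apply, Matrix.submatrix_apply, id, Finset.sum_apply,
        Pi.smul_apply, smul_eq_mul]
      rw [Nmat, Matrix.mul_apply]
      exact Finset.sum_congr rfl fun i _ => mul_comm _ _
    rw [this]
    have h3 := (Matrix.detRowAlternating (n := Fin d) (R := Q)).toMultilinearMap.map_sum
      (fun (k : Fin d) (i : Fin n) => E i (e k) • (fun a => φ (M a i)))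
    refine h3.trans (Finset.sum_congr rfl fun f _ => ?_)
    rw [MultilinearMap.map_smul_univ, smul_eq_mul]
    congr 1
    rw [RingHom.map_det, ← Matrix.det_transpose]
    rfl
  rw [hexp] at h
  obtain ⟨f, -, hf⟩ := Finset.exists_ne_zero_of_sum_ne_zero h
  have hE : ∀ k, E (f k) (e k) ≠ 0 := fun k =>
    Finset.prod_ne_zero_iff.1 (left_ne_zero_of_mul hf) k (Finset.mem_univ _)
  have hdet : (M.submatrix id f).det ≠ 0 := fun h0 => by simp [h0] at hf
  have hrel : ∀ k, eVec n (e k) - eVec n (f k) ∈ C := by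
    intro k
    by_contra hcon
    apply hE k
    have hne : f k ≠ e k := by
      intro h0
      rw [h0, sub_self] at hcon
      exact hcon (cone_zero hC)
    simp [E, Bmat, hne, hcon]
  have hli : LinearIndependent K (fun k => M.transpose (f k)) :=
    Matrix.linearIndependent_cols_of_det_ne_zero hdet
  have hinj : Function.Injective f := fun a b hab => hli.injective (by simp [hab])
  have hz : ∑ i ∈ z, eVec n i = ∑ k, eVec n (e k) := by
    rw [← Finset.sum_coe_sort z, ← e.sum_comp]
  refine ⟨∑ k, eVec n (f k), subset_convexHull ℝ _ ⟨Finset.univ.image f, ?_, ?_, ?_⟩,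
    ∑ k, (eVec n (e k) - eVec n (f k)), cone_sum hC _ _ (fun k _ => hrel k), ?_⟩
  · rw [Finset.card_image_of_injective _ hinj]; simp
  · have : LinearIndepOn K M.transpose (Set.range f) :=
      (linearIndepOn_range_iff hinj _).2 hli
    have e : ((Finset.univ.image f : Finset (Fin n)) : Set (Fin n)) = Set.range f := by simp
    rw [← e] at this
    exact this
  · rw [Finset.sum_image (fun a _ b _ h => hinj h)]
  · simp only [Finset.sum_sub_distrib]
    rw [hz]
    abel

lemma eSum_mem_hypersimplex {d n : ℕ} (z : Finset (Fin n)) (hz : z.card = d) :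
    (∑ i ∈ z, eVec n i) ∈ hypersimplex d n := by
  refine ⟨fun i => ?_, ?_⟩
  · rw [sum_eVec_apply]
    split_ifs <;> norm_num
  · simp only [sum_eVec_apply]
    simp [hz]

lemma hypersimplex_convex (d n : ℕ) : Convex ℝ (hypersimplex d n) := by
  intro x hx y hy a b ha hb hab
  refine ⟨fun i => ⟨?_, ?_⟩, ?_⟩
  · have := (hx.1 i).1
    have := (hy.1 i).1
    simp only [Pi.add_apply, Pi.smul_apply, smul_eq_mul]
    positivity
  · have h1 := mul_le_mul_of_nonneg_left (hx.1 i).2 ha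
    have h2 := mul_le_mul_of_nonneg_left (hy.1 i).2 hb
    simp only [Pi.add_apply, Pi.smul_apply, smul_eq_mul]
    linarith
  · simp only [Pi.add_apply, Pi.smul_apply, smul_eq_mul, Finset.sum_add_distrib, ← Finset.mul_sum]
    rw [hx.2, hy.2, ← add_mul, hab, one_mul]

lemma det_iff_indep {Q F : Type*} [CommRing Q] [IsDomain Q] [Field F] [Algebra Q F]
    [IsFractionRing Q F] {d n : ℕ}
    (N : Matrix (Fin d) (Fin n) Q) (z : Finset (Fin n)) (e : Fin d ≃ z) :
    (N.submatrix id (fun i : Fin d => (e i : Fin n))).det ≠ 0 ↔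
      LinearIndependent F (fun i : z => (N.map (algebraMap Q F)).transpose i) := by
  rw [← linearIndependent_equiv e]
  have h1 : (N.submatrix id (fun i : Fin d => (e i : Fin n))).det ≠ 0 ↔
      ((N.map (algebraMap Q F)).submatrix id (fun i : Fin d => (e i : Fin n))).det ≠ 0 := by
    rw [← map_ne_zero_iff (algebraMap Q F) (IsFractionRing.injective Q F), RingHom.map_det]
    rfl
  rw [h1, ← isUnit_iff_ne_zero, ← Matrix.isUnit_iff_isUnit_det,
    ← Matrix.linearIndependent_cols_iff_isUnit]
  rfl

/-- For `N = M(1 + tB)`: a `d × d` minor of `N` on columns `z` is nonzero iff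
`e_z ∈ P_M + C`; consequently the rank polytope of `N` over `L(t)` equals
`(P_M + C) ∩ Δ_{d,n}`. -/
theorem det_minor_ne_zero_iff_and_rankPolytope_eq {K : Type*} [Field K] {d n : ℕ}
    (M : Matrix (Fin d) (Fin n) K) (hM : M.rank = d)
    (C : Set (Fin n → ℝ)) (hC : IsMatroidalCone C) :
    (∀ (z : Finset (Fin n)) (hz : z.card = d),
      ((Nmat M C).submatrix id
          (fun i : Fin d => ((z.orderIsoOfFin hz i : ↥z) : Fin n))).det ≠ 0 ↔
        (∑ i ∈ z, eVec n i) ∈ rankPolytope M + C) ∧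
    rankPolytope ((Nmat M C).map
        (algebraMap (Polynomial (LField K n C))
          (FractionRing (Polynomial (LField K n C))))) =
      (rankPolytope M + C) ∩ hypersimplex d n := by
  have hpart1 : ∀ (z : Finset (Fin n)) (hz : z.card = d),
      ((Nmat M C).submatrix id
          (fun i : Fin d => ((z.orderIsoOfFin hz i : ↥z) : Fin n))).det ≠ 0 ↔
        (∑ i ∈ z, eVec n i) ∈ rankPolytope M + C := by
    intro z hz
    refine ⟨det_fwd M C hC z (z.orderIsoOfFin hz).toEquiv, fun h => ?_⟩
    refine (det_iff_indep (F := FractionRing (Polynomial (LField K n C)))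
      (Nmat M C) z (z.orderIsoOfFin hz).toEquiv).2 ?_
    have h1 := rk_N M C hC h (eSum_mem_hypersimplex z hz).1 z
    simp only [sum_eVec_apply] at h1
    have h2 : z.card ≤ rk (FractionRing (Polynomial (LField K n C))) ((Nmat M C).map
        (algebraMap (Polynomial (LField K n C))
          (FractionRing (Polynomial (LField K n C))))).transpose z := by
      have : (∑ i ∈ z, if i ∈ z then (1 : ℝ) else 0) = z.card := by simp
      rw [this] at h1
      exact_mod_cast h1
    obtain ⟨y, hyz, hy, hyc⟩ := exists_indep (K := FractionRing (Polynomial (LField K n C)))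
      ((Nmat M C).map (algebraMap (Polynomial (LField K n C))
          (FractionRing (Polynomial (LField K n C))))).transpose z
    rw [hyc] at h2
    have := Finset.eq_of_subset_of_card_le hyz h2
    subst this
    exact hy
  refine ⟨hpart1, Set.Subset.antisymm ?_ ?_⟩
  · refine convexHull_min ?_ (Convex.inter (Convex.add (convex_convexHull ℝ _) (cone_convex hC))
      (hypersimplex_convex d n))
    rintro _ ⟨z, hz, hli, rfl⟩
    refine ⟨(hpart1 z hz).1 ?_, eSum_mem_hypersimplex z hz⟩
    exact (det_iff_indep (F := FractionRing (Polynomial (LField K n C)))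
      (Nmat M C) z (z.orderIsoOfFin hz).toEquiv).2 hli
  · rintro x ⟨hx, hxh⟩
    exact mem_rankPolytope _ x (rk_N M C hC hx hxh.1) hxh.2
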